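/- Let X ∈ ℝ^{m×n} be a matrix, let I ⊆ {1,…,m} and J ⊆ {1,…,n} be index sets, and set C = X(:,J) (the submatrix of X consisting of the columns indexed by J), U = X(I,J) (the submatrix with rows indexed by I and columns indexed by J), and R = X(I,:) (the submatrix consisting of the rows indexed by I). If rank(U) = rank(X), then X = C U† R, where U† is the Moore–Penrose pseudoinverse of U; that is, for every matrix Y satisfying the Penrose conditions for U, one has X = C Y R. -/

import Mathlib

open Matrix

/-- `Y` satisfies the four Penrose conditions for `U`, i.e. `Y` is a
Moore–Penrose pseudoinverse of `U`. -/
def IsMoorePenrose {p q : Type*} [Fintype p] [Fintype q]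
    (U : Matrix p q ℝ) (Y : Matrix q p ℝ) : Prop :=
  U * Y * U = U ∧ Y * U * Y = Y ∧ (U * Y)ᵀ = U * Y ∧ (Y * U)ᵀ = Y * U

/-!
Write `U = P X Q`, `C = X Q` and `R = P X` with selection matrices `P` and `Q`. Since `U` has the
rank of `X`, so do `P X` and `X Q`; hence `P X` has the kernel of `X` and `X Q` its range, and `P`
and `Q` can be cancelled next to `X`. Cancelling both in `U Y U = U`, that is, in
`P (X Q Y P X) Q = P X Q`, leaves `C Y R = X`.
-/

section RankCancellation

variable {K l m n o : Type*} [Field K] [Fintype m] [Fintype n]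

theorem ker_mulVecLin_mul_eq_of_rank_le {P : Matrix l m K} {X : Matrix m n K}
    (hrank : X.rank ≤ (P * X).rank) :
    LinearMap.ker (P * X).mulVecLin = LinearMap.ker X.mulVecLin := by
  have ker_le : LinearMap.ker X.mulVecLin ≤ LinearMap.ker (P * X).mulVecLin := by
    rw [mulVecLin_mul]
    exact LinearMap.ker_le_ker_comp _ _
  refine (Submodule.eq_of_le_of_finrank_le ker_le ?_).symm
  have nullity_X := X.mulVecLin.finrank_range_add_finrank_ker
  have nullity_PX := (P * X).mulVecLin.finrank_range_add_finrank_ker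
  simp only [Matrix.rank] at hrank
  lia

theorem mul_left_cancel_of_rank_le {P : Matrix l m K} {X : Matrix m n K}
    (hrank : X.rank ≤ (P * X).rank) {A B : Matrix n o K} (h : P * X * A = P * X * B) :
    X * A = X * B := by
  ext i j
  have col_sub_mem_ker : A.col j - B.col j ∈ LinearMap.ker (P * X).mulVecLin := by
    rw [LinearMap.sub_mem_ker_iff]
    exact congrArg (fun M => M.col j) h
  rw [ker_mulVecLin_mul_eq_of_rank_le hrank, LinearMap.sub_mem_ker_iff] at col_sub_mem_ker
  exact congrFun col_sub_mem_ker i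

theorem mul_right_cancel_of_rank_le [Fintype o] {X : Matrix m n K} {Q : Matrix n o K}
    (hrank : X.rank ≤ (X * Q).rank) {A B : Matrix l m K} (h : A * X * Q = B * X * Q) :
    A * X = B * X := by
  have hrank_transpose : Xᵀ.rank ≤ (Qᵀ * Xᵀ).rank := by
    rwa [← transpose_mul, rank_transpose, rank_transpose]
  apply transpose_injective
  simp only [transpose_mul]
  apply mul_left_cancel_of_rank_le hrank_transpose
  simpa only [transpose_mul, Matrix.mul_assoc] using congrArg transpose h

theorem eq_mul_mul_of_rank_le [Fintype l] [Fintype o] {P : Matrix l m K} {X : Matrix m n K}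
    {Q : Matrix n o K} (hrank : X.rank ≤ (P * X * Q).rank) {Y : Matrix o l K}
    (hY : P * X * Q * Y * (P * X * Q) = P * X * Q) :
    X = X * Q * Y * (P * X) := by
  classical
  have rank_le_PX : X.rank ≤ (P * X).rank := hrank.trans (rank_mul_le_left _ _)
  have rank_le_XQ : X.rank ≤ (X * Q).rank := by
    rw [Matrix.mul_assoc] at hrank
    exact hrank.trans (rank_mul_le_right _ _)
  have cancel_Q : P * X * Q * Y * P * X = P * X :=
    mul_right_cancel_of_rank_le rank_le_XQ (by simpa only [Matrix.mul_assoc] using hY)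
  have cancel_P : X * (Q * Y * P * X) = X * (1 : Matrix n n K) :=
    mul_left_cancel_of_rank_le rank_le_PX
      (by simpa only [Matrix.mul_assoc, Matrix.mul_one] using cancel_Q)
  simpa only [Matrix.mul_assoc, Matrix.mul_one] using cancel_P.symm

end RankCancellation

theorem cur_decomposition_general {K m n ι κ : Type*} [Field K] [Finite m] [Fintype n]
    [Fintype ι] [Fintype κ] (X : Matrix m n K) (r : ι → m) (c : κ → n)
    (hrank : (X.submatrix r c).rank = X.rank) {Y : Matrix κ ι K}
    (hY : X.submatrix r c * Y * X.submatrix r c = X.submatrix r c) :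
    X = X.submatrix id c * Y * X.submatrix r id := by
  classical
  cases nonempty_fintype m
  let P : Matrix ι m K := (1 : Matrix m m K).submatrix r id
  let Q : Matrix n κ K := (1 : Matrix n n K).submatrix id c
  have hC : X.submatrix id c = X * Q := (mul_submatrix_one (Equiv.refl n) c X).symm
  have hR : X.submatrix r id = P * X := (one_submatrix_mul r (Equiv.refl m) X).symm
  have hU : X.submatrix r c = P * X * Q := by
    rw [← hR]
    exact (mul_submatrix_one (Equiv.refl n) c (X.submatrix r id)).symm
  rw [hU] at hrank hY
  rw [hC, hR]
  exact eq_mul_mul_of_rank_le hrank.ge hY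

/-- **CUR decomposition.** If `C = X(:,J)`, `U = X(I,J)`, `R = X(I,:)` and
`rank U = rank X`, then `X = C U† R` for any Moore–Penrose pseudoinverse `U†` of `U`. -/
theorem cur_decomposition {m n : ℕ} (X : Matrix (Fin m) (Fin n) ℝ)
    (I : Finset (Fin m)) (J : Finset (Fin n))
    (C : Matrix (Fin m) ↥J ℝ) (U : Matrix ↥I ↥J ℝ) (R : Matrix ↥I (Fin n) ℝ)
    (hC : C = X.submatrix id (fun j : ↥J => (j : Fin n)))
    (hU : U = X.submatrix (fun i : ↥I => (i : Fin m)) (fun j : ↥J => (j : Fin n)))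
    (hR : R = X.submatrix (fun i : ↥I => (i : Fin m)) id)
    (hrank : U.rank = X.rank) :
    ∀ Y : Matrix ↥J ↥I ℝ, IsMoorePenrose U Y → X = C * Y * R := by
  rintro Y ⟨hUYU, -⟩
  subst hC hU hR
  exact cur_decomposition_general X _ _ hrank hUYU
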